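/- Let p ≥ 1 be real and N ≥ n an integer. If a symmetric convex body K ⊂ ℝ^n maximizes 𝔼 U_{K, N+1}^p over all symmetric convex bodies in ℝ^n, or maximizes 𝔼 V_{K, N}^p over all symmetric convex bodies in ℝ^n, then K is SRS-indecomposable. -/

import Mathlib

open MeasureTheory Set
open scoped RealInnerProductSpace

noncomputable section

variable {E : Type*} [NormedAddCommGroup E] [InnerProductSpace ℝ E]

/-- Orthogonal projection `π_v` onto the hyperplane `v^⊥`. -/
def projPerp (v x : E) : E := x - (⟪x, v⟫ / ⟪v, v⟫) • v

/-- The family of sets `K_t = { x + t β(π_v(x)) v : x ∈ K }` underlying an RS-movement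
with direction `v` and speed function `β`. -/
def RSFamily (K : Set E) (v : E) (β : E → ℝ) (t : ℝ) : Set E :=
  (fun x => x + (t * β (projPerp v x)) • v) '' K

/-- A symmetric convex body `K` is SRS-decomposable if there are `ε > 0`, a direction
`v ≠ 0` and a speed function `β` which is odd on `π_v(K)` and is not the restriction of a
linear functional, such that `K_t` is convex for every `t ∈ (-ε, ε)`
(note `K_0 = K` automatically). -/
def IsSRSDecomposable (K : Set E) : Prop :=
  ∃ (v : E) (β : E → ℝ) (ε : ℝ), 0 < ε ∧ v ≠ 0 ∧
    (∀ x ∈ projPerp v '' K, β (-x) = -β x) ∧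
    (∀ t ∈ Set.Ioo (-ε) ε, Convex ℝ (RSFamily K v β t)) ∧
    ¬∃ ℓ : E →ₗ[ℝ] ℝ, ∀ x ∈ projPerp v '' K, β x = ℓ x

/-- A symmetric convex body: a compact convex set with nonempty interior with `K = -K`. -/
def IsSymConvexBody (K : Set E) : Prop :=
  IsCompact K ∧ Convex ℝ K ∧ (interior K).Nonempty ∧ K = -K

/-- `momentU n N K p = 𝔼 U_{K,N}^p`, the `p`-th moment of the normalized volume of the
convex hull of `N` independent uniform random points in `K ⊆ ℝⁿ`. -/
def momentU (n N : ℕ) (K : Set (EuclideanSpace ℝ (Fin n))) (p : ℝ) : ℝ :=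
  (∫ x : Fin N → EuclideanSpace ℝ (Fin n) in {x | ∀ i, x i ∈ K},
      ((volume (convexHull ℝ (Set.range x))).toReal / (volume K).toReal) ^ p) /
    (volume K).toReal ^ N

/-- `momentV n N K p = 𝔼 V_{K,N}^p`, the `p`-th moment of the normalized volume of the
symmetric convex hull `conv{±x₁, …, ±x_N}` of `N` independent uniform random points
in `K ⊆ ℝⁿ`. -/
def momentV (n N : ℕ) (K : Set (EuclideanSpace ℝ (Fin n))) (p : ℝ) : ℝ :=
  (∫ x : Fin N → EuclideanSpace ℝ (Fin n) in {x | ∀ i, x i ∈ K},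
      ((volume (convexHull ℝ (Set.range x ∪ -Set.range x))).toReal / (volume K).toReal) ^ p) /
    (volume K).toReal ^ N

/-!
For a fixed choice of points, moving them along an SRS-movement changes their hull by a shadow
system, whose volume is convex in time. Averaging over the points, the `p`-th moment is
midpoint-convex along the movement, since shears preserve volume. If `K` is a maximiser, equality
must hold almost everywhere, and by continuity for all points interior to `K`. Hence every
degenerate configuration of interior points remains degenerate when it is sheared. Applied to a
basis of a hyperplane transversal to `v` together with one further point of this hyperplane, this
forces the speed function to be linear over the hyperplane. Hyperplanes through a given point and
the origin give homogeneity, the hyperplane `v^⊥` then gives linearity over the interior, and radial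
continuity gives it up to the boundary.
-/

open Filter Topology
open scoped Pointwise ENNReal

section LinearImages

variable {F G : Type*} [NormedAddCommGroup F] [NormedSpace ℝ F]
  [NormedAddCommGroup G] [NormedSpace ℝ G]

/-- Otherwise a functional separates `z` from `L '' C`, although `L₀ '' C` contains a ball around
`z` and is uniformly close to `L '' C`. -/
theorem eventually_mem_image_of_mem_interior {C : Set F} (hC : IsCompact C) (hconv : Convex ℝ C)
    {L₀ : F →L[ℝ] G} {z : G} (hz : z ∈ interior (L₀ '' C)) :
    ∀ᶠ L : F →L[ℝ] G in 𝓝 L₀, z ∈ L '' C := by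
  obtain ⟨R, hR0, hR⟩ := hC.isBounded.exists_pos_norm_le
  obtain ⟨r, hr0, hr⟩ := Metric.nhds_basis_closedBall.mem_iff.1 (mem_interior_iff_mem_nhds.1 hz)
  filter_upwards [Metric.ball_mem_nhds L₀ (div_pos hr0 hR0)] with L hL
  rw [mem_ball_iff_norm, lt_div_iff₀ hR0] at hL
  by_contra hzL
  obtain ⟨f, u, hfu, huz⟩ := geometric_hahn_banach_closed_point
    (hconv.linear_image L.toLinearMap) (hC.image L.continuous).isClosed hzL
  have hbound : ∀ c ∈ C, ‖f ((L₀ - L) c)‖ ≤ ‖f‖ * (‖L - L₀‖ * R) := fun c hc ↦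
    calc ‖f ((L₀ - L) c)‖ ≤ ‖f‖ * (‖L₀ - L‖ * ‖c‖) :=
          (f.le_opNorm _).trans <| by gcongr; exact (L₀ - L).le_opNorm c
      _ ≤ ‖f‖ * (‖L - L₀‖ * R) := by rw [norm_sub_rev]; gcongr; exact hR c hc
  have hball : ∀ e ∈ Metric.closedBall (0 : G) r, f e < ‖f‖ * (‖L - L₀‖ * R) := by
    intro e he
    obtain ⟨c, hc, hce⟩ : z + e ∈ L₀ '' C := hr (by simpa using he)
    have hsep : f (L c) < f z := (hfu _ (mem_image_of_mem _ hc)).trans huz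
    have hdiff : f ((L₀ - L) c) = f z + f e - f (L c) := by simp [hce]
    linarith [(le_abs_self _).trans (hbound c hc)]
  have hnorm : ‖f‖ ≤ ‖f‖ * (‖L - L₀‖ * R) / r :=
    f.opNorm_bound_of_ball_bound hr0 _ fun e he ↦ abs_le.2
      ⟨by linarith [hball (-e) (by simpa using he), map_neg f e], (hball e he).le⟩
  have hpos : 0 < ‖f‖ * (‖L - L₀‖ * R) := by simpa using hball 0 (by simp [hr0.le])
  rw [le_div_iff₀ hr0] at hnorm
  exact (mul_lt_mul_of_pos_left hL (pos_of_mul_pos_left hpos (by positivity))).not_ge hnorm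

theorem eventually_notMem_image {C : Set F} (hC : IsCompact C) {L₀ : F →L[ℝ] G} {z : G}
    (hz : z ∉ L₀ '' C) : ∀ᶠ L : F →L[ℝ] G in 𝓝 L₀, z ∉ L '' C := by
  have hne : ∀ᶠ L : F →L[ℝ] G in 𝓝 L₀, ∀ c ∈ C, L c ≠ z :=
    hC.eventually_forall_of_forall_eventually fun c hc ↦
      (isBoundedBilinearMap_apply.continuous.tendsto (L₀, c)).eventually_ne
        fun h ↦ hz ⟨c, hc, h⟩
  filter_upwards [hne] with L hL
  rintro ⟨c, hc, rfl⟩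
  exact hL c hc rfl

variable [FiniteDimensional ℝ G] [MeasurableSpace G] [BorelSpace G]
  (μ : Measure G) [μ.IsAddHaarMeasure]

theorem continuous_measureReal_image {C : Set F} (hC : IsCompact C) (hconv : Convex ℝ C) :
    Continuous fun L : F →L[ℝ] G ↦ μ.real (L '' C) := by
  have hcompact (L : F →L[ℝ] G) : IsCompact (L '' C) := hC.image L.continuous
  have hconvex (L : F →L[ℝ] G) : Convex ℝ (L '' C) := hconv.linear_image L.toLinearMap
  obtain ⟨R, -, hR⟩ := hC.isBounded.exists_pos_norm_le
  refine continuous_iff_continuousAt.2 fun L₀ ↦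
    (ENNReal.tendsto_toReal (hcompact L₀).measure_ne_top).comp ?_
  refine tendsto_measure_of_ae_tendsto_indicator (𝓝 L₀) (hcompact L₀).measurableSet
    (fun L ↦ (hcompact L).measurableSet) Metric.isClosed_closedBall.measurableSet
    (measure_closedBall_lt_top (x := 0) (r := (‖L₀‖ + 1) * R)).ne ?_ ?_
  · filter_upwards [continuous_norm.tendsto L₀ (Iio_mem_nhds (lt_add_one _))] with L hL
    rintro _ ⟨c, hc, rfl⟩
    simpa using (L.le_opNorm c).trans (mul_le_mul (mem_Iio.1 hL).le (hR c hc) (norm_nonneg c)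
      (by positivity))
  · have hfrontier : ∀ᵐ z ∂μ, z ∉ frontier (L₀ '' C) :=
      measure_eq_zero_iff_ae_notMem.1 ((hconvex L₀).addHaar_frontier μ)
    filter_upwards [hfrontier] with z hz
    by_cases hzL : z ∈ L₀ '' C
    · rw [(hcompact L₀).isClosed.frontier_eq] at hz
      have hint : z ∈ interior (L₀ '' C) := by_contra fun h ↦ hz ⟨hzL, h⟩
      filter_upwards [eventually_mem_image_of_mem_interior hC hconv hint] with L hL
      exact iff_of_true hL hzL
    · filter_upwards [eventually_notMem_image hC hzL] with L hL
      exact iff_of_false hL hzL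

theorem measure_convexHull_eq_zero_iff {s : Set G} (hs : (0 : G) ∈ convexHull ℝ s) :
    μ (convexHull ℝ s) = 0 ↔ Submodule.span ℝ s ≠ ⊤ := by
  have hspan : (affineSpan ℝ s : Set G) = Submodule.span ℝ s := by
    rw [← affineSpan_insert_zero, affineSpan_insert_eq_affineSpan ℝ]
    exact convexHull_subset_affineSpan s hs
  constructor
  · intro h htop
    have hint : (interior (convexHull ℝ s)).Nonempty := by
      rw [interior_convexHull_nonempty_iff_affineSpan_eq_top]
      exact SetLike.coe_injective (by rw [hspan, htop]; rfl)
    exact (isOpen_interior.measure_pos μ hint).ne' (measure_mono_null interior_subset h)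
  · intro h
    refine measure_mono_null ?_ (Measure.addHaar_submodule μ _ h)
    exact convexHull_min Submodule.subset_span (Submodule.span ℝ s).convex

end LinearImages

section Height

/-- The coordinate along `v`: `x = projPerp v x + height v x • v`. -/
def height (v : E) : E →L[ℝ] ℝ := (⟪v, v⟫)⁻¹ • innerSL ℝ v

theorem height_self {v : E} (hv : v ≠ 0) : height v v = 1 := by
  simp [height, hv]

theorem projPerp_eq_sub_height (v x : E) : projPerp v x = x - height v x • v := by
  simp [projPerp, height, real_inner_comm, div_eq_inv_mul]

/-- `projPerp v` as a continuous linear map. -/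
def projPerpL (v : E) : E →L[ℝ] E := .id ℝ E - (height v).smulRight v

@[simp]
theorem coe_projPerpL (v : E) : ⇑(projPerpL v) = projPerp v := by
  ext x
  simp [projPerpL, projPerp_eq_sub_height]

theorem continuous_projPerp (v : E) : Continuous (projPerp v) :=
  coe_projPerpL v ▸ (projPerpL v).continuous

theorem projPerp_zero (v : E) : projPerp v 0 = 0 := by
  simpa using map_zero (projPerpL v)

theorem projPerp_neg (v x : E) : projPerp v (-x) = -projPerp v x := by
  simpa using map_neg (projPerpL v) x

theorem projPerp_smul (v : E) (c : ℝ) (x : E) : projPerp v (c • x) = c • projPerp v x := by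
  rw [← coe_projPerpL, map_smul]

theorem height_projPerp {v : E} (hv : v ≠ 0) (x : E) : height v (projPerp v x) = 0 := by
  simp [projPerp_eq_sub_height, height_self hv]

theorem projPerp_of_height_eq_zero {v x : E} (hx : height v x = 0) : projPerp v x = x := by
  simp [projPerp_eq_sub_height, hx]

theorem projPerp_projPerp {v : E} (hv : v ≠ 0) (x : E) : projPerp v (projPerp v x) = projPerp v x :=
  projPerp_of_height_eq_zero (height_projPerp hv x)

theorem projPerp_add_smul {v : E} (hv : v ≠ 0) (x : E) (r : ℝ) :
    projPerp v (x + r • v) = projPerp v x := by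
  simp only [projPerp_eq_sub_height, map_add, map_smul, height_self hv, smul_eq_mul, mul_one]
  module

theorem projPerp_add_height_smul (v x : E) : projPerp v x + height v x • v = x := by
  simp [projPerp_eq_sub_height]

/-- Splitting of `E` into the hyperplane `v^⊥`, written as the kernel of `height v`, and the line
spanned by `v`. -/
def lineCoords {v : E} (hv : v ≠ 0) : E ≃L[ℝ] (height v).ker × ℝ :=
  (ContinuousLinearEquiv.equivOfRightInverse (height v) ((ContinuousLinearMap.id ℝ ℝ).smulRight v)
    fun r ↦ by simp [height_self hv]).trans (ContinuousLinearEquiv.prodComm ℝ ℝ (height v).ker)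

theorem lineCoords_fst {v : E} (hv : v ≠ 0) (x : E) : ((lineCoords hv x).1 : E) = projPerp v x :=
  (projPerp_eq_sub_height v x).symm

theorem lineCoords_snd {v : E} (hv : v ≠ 0) (x : E) : (lineCoords hv x).2 = height v x := rfl

theorem lineCoords_symm_apply {v : E} (hv : v ≠ 0) (q : (height v).ker × ℝ) :
    (lineCoords hv).symm q = q.1 + q.2 • v := by
  obtain ⟨x, rfl⟩ := (lineCoords hv).surjective q
  rw [ContinuousLinearEquiv.symm_apply_apply, lineCoords_fst, lineCoords_snd,
    projPerp_add_height_smul]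

variable [FiniteDimensional ℝ E] [MeasurableSpace E] [BorelSpace E]
  (μ : Measure E) [μ.IsAddHaarMeasure]

theorem exists_measurePreserving_lineCoords {v : E} (hv : v ≠ 0) :
    ∃ ν : Measure (height v).ker, SFinite ν ∧
      MeasurePreserving (lineCoords hv) μ (ν.prod volume) := by
  let η : Measure (height v).ker := Measure.addHaar
  refine ⟨Measure.addHaarScalarFactor (μ.map (lineCoords hv)) (η.prod volume) • η, inferInstance,
    (lineCoords hv).continuous.measurable, ?_⟩
  rw [Measure.prod_smul_left]
  exact Measure.isAddLeftInvariant_eq_smul _ _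

end Height

section ShadowSystem

/-- The intersection of `A` with the line through `x` in direction `v`, parametrised so that `x`
sits at `0`. -/
def chord (v x : E) (A : Set E) : Set ℝ := {r | x + r • v ∈ A}

theorem mem_chord {v x : E} {A : Set E} {r : ℝ} : r ∈ chord v x A ↔ x + r • v ∈ A := Iff.rfl

theorem smul_chord_add_smul_chord_subset (v : E) {A : Set E} (hA : Convex ℝ A) (x y : E) {a b : ℝ}
    (ha : 0 ≤ a) (hb : 0 ≤ b) (hab : a + b = 1) :
    a • chord v x A + b • chord v y A ⊆ chord v (a • x + b • y) A := by
  rintro _ ⟨_, ⟨r, hr, rfl⟩, _, ⟨s, hs, rfl⟩, rfl⟩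
  rw [mem_chord] at hr hs ⊢
  convert hA hr hs ha hb hab using 1
  simp only [smul_eq_mul]
  module

theorem convex_chord (v x : E) {A : Set E} (hA : Convex ℝ A) : Convex ℝ (chord v x A) :=
  convex_iff_pointwise_add_subset.2 fun a b ha hb hab ↦ by
    simpa [Convex.combo_self hab] using smul_chord_add_smul_chord_subset v hA x x ha hb hab

theorem edist_le_volume_of_convex {S : Set ℝ} (hS : Convex ℝ S) {r s : ℝ} (hr : r ∈ S)
    (hs : s ∈ S) : edist r s ≤ volume S := by
  rw [edist_comm, edist_dist, Real.dist_eq, ← Real.volume_interval, ← segment_eq_uIcc]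
  exact measure_mono (hS.segment_subset hr hs)

theorem volume_le_of_subset_smul_add_smul {S S₁ S₂ : Set ℝ} (h₁ : Convex ℝ S₁) (h₂ : Convex ℝ S₂)
    {a b : ℝ} (ha : 0 ≤ a) (hb : 0 ≤ b) (hS : S ⊆ a • S₁ + b • S₂) :
    volume S ≤ ENNReal.ofReal a * volume S₁ + ENNReal.ofReal b * volume S₂ := by
  refine (Real.volume_le_diam S).trans (Metric.ediam_le fun r hr s hs ↦ ?_)
  obtain ⟨_, ⟨r₁, hr₁, rfl⟩, _, ⟨r₂, hr₂, rfl⟩, rfl⟩ := hS hr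
  obtain ⟨_, ⟨s₁, hs₁, rfl⟩, _, ⟨s₂, hs₂, rfl⟩, rfl⟩ := hS hs
  calc edist (a • r₁ + b • r₂) (a • s₁ + b • s₂)
      ≤ edist (a • r₁) (a • s₁) + edist (b • r₂) (b • s₂) := edist_add_add_le _ _ _ _
    _ = ENNReal.ofReal a * edist r₁ s₁ + ENNReal.ofReal b * edist r₂ s₂ := by
      simp only [edist_dist, dist_smul₀, Real.norm_of_nonneg, ha, hb, ENNReal.ofReal_mul]
    _ ≤ _ := by
      gcongr
      exacts [edist_le_volume_of_convex h₁ hr₁ hs₁, edist_le_volume_of_convex h₂ hr₂ hs₂]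

theorem measure_eq_lintegral_chord [MeasurableSpace E] [BorelSpace E] {μ : Measure E} {v : E}
    (hv : v ≠ 0) {ν : Measure (height v).ker} [SFinite ν]
    (hν : MeasurePreserving (lineCoords hv) μ (ν.prod volume)) {A : Set E} (hA : MeasurableSet A) :
    μ A = ∫⁻ y : (height v).ker, volume (chord v y A) ∂ν := by
  have hm : MeasurableSet ((lineCoords hv).symm ⁻¹' A) :=
    (lineCoords hv).symm.continuous.measurable hA
  have hμ : μ A = (ν.prod volume) ((lineCoords hv).symm ⁻¹' A) := by
    rw [← hν.measure_preimage hm.nullMeasurableSet, ← preimage_comp]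
    simp
  rw [hμ, Measure.prod_apply hm]
  simp only [preimage, mem_ofPred_eq, lineCoords_symm_apply, chord]

theorem measurable_volume_chord [MeasurableSpace E] [BorelSpace E] {v : E} (hv : v ≠ 0) {A : Set E}
    (hA : MeasurableSet A) : Measurable fun y : (height v).ker ↦ volume (chord v y A) := by
  have hm : MeasurableSet ((lineCoords hv).symm ⁻¹' A) :=
    (lineCoords hv).symm.continuous.measurable hA
  simpa only [preimage, mem_ofPred_eq, lineCoords_symm_apply, chord] using
    measurable_measure_prodMk_left (ν := (volume : Measure ℝ)) hm

variable {F : Type*} [NormedAddCommGroup F] [NormedSpace ℝ F]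

theorem chord_image_subset (C : Set F) (L : F →L[ℝ] E) (φ : F →L[ℝ] ℝ) (v x : E) (s t : ℝ)
    {a b : ℝ} (hab : a + b = 1) :
    chord v x ((L + (a • s + b • t) • φ.smulRight v) '' C) ⊆
      a • chord v x ((L + s • φ.smulRight v) '' C) +
        b • chord v x ((L + t • φ.smulRight v) '' C) := by
  obtain rfl : b = 1 - a := by linarith
  rintro r ⟨c, hc, hcr⟩
  have hmem (u : ℝ) : r + (u - (a • s + (1 - a) • t)) * φ c ∈
      chord v x ((L + u • φ.smulRight v) '' C) := by
    refine ⟨c, hc, ?_⟩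
    rw [add_smul, ← add_assoc, ← hcr]
    simp only [add_apply, smul_apply, ContinuousLinearMap.smulRight_apply]
    module
  refine ⟨_, smul_mem_smul_set (hmem s), _, smul_mem_smul_set (hmem t), ?_⟩
  simp only [smul_eq_mul]
  ring

/-- Rogers–Shephard: each chord at an intermediate time lies in the Minkowski combination of the
chords at the two outer times, and for intervals length is additive. -/
theorem convexOn_measureReal_shadowSystem [FiniteDimensional ℝ E] [MeasurableSpace E] [BorelSpace E]
    (μ : Measure E) [μ.IsAddHaarMeasure] {C : Set F} (hC : IsCompact C) (hconv : Convex ℝ C)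
    (L : F →L[ℝ] E) (φ : F →L[ℝ] ℝ) {v : E} (hv : v ≠ 0) :
    ConvexOn ℝ univ fun t : ℝ ↦ μ.real ((L + t • φ.smulRight v) '' C) := by
  have hcompact (t : ℝ) : IsCompact ((L + t • φ.smulRight v) '' C) := hC.image (map_continuous _)
  have hconvex (t : ℝ) : Convex ℝ ((L + t • φ.smulRight v) '' C) :=
    hconv.linear_image (L + t • φ.smulRight v).toLinearMap
  obtain ⟨ν, _, hν⟩ := exists_measurePreserving_lineCoords μ hv
  refine ⟨convex_univ, fun s _ t _ a b ha hb hab ↦ ?_⟩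
  have hle : μ ((L + (a • s + b • t) • φ.smulRight v) '' C) ≤
      ENNReal.ofReal a * μ ((L + s • φ.smulRight v) '' C) +
        ENNReal.ofReal b * μ ((L + t • φ.smulRight v) '' C) := by
    have hmeas (t : ℝ) := (hcompact t).measurableSet
    simp only [measure_eq_lintegral_chord hv hν (hmeas _)]
    rw [← lintegral_const_mul _ (measurable_volume_chord hv (hmeas s)),
      ← lintegral_const_mul _ (measurable_volume_chord hv (hmeas t)),
      ← lintegral_add_left ((measurable_volume_chord hv (hmeas s)).const_mul _)]
    exact lintegral_mono fun y ↦ volume_le_of_subset_smul_add_smul (convex_chord v y (hconvex s))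
      (convex_chord v y (hconvex t)) ha hb (chord_image_subset C L φ v y s t hab)
  have hfin (c t : ℝ) : ENNReal.ofReal c * μ ((L + t • φ.smulRight v) '' C) ≠ ∞ :=
    ENNReal.mul_ne_top ENNReal.ofReal_ne_top (hcompact t).measure_ne_top
  have := ENNReal.toReal_mono (ENNReal.add_ne_top.2 ⟨hfin a s, hfin b t⟩) hle
  rwa [ENNReal.toReal_add (hfin a s) (hfin b t), ENNReal.toReal_mul, ENNReal.toReal_mul,
    ENNReal.toReal_ofReal ha, ENNReal.toReal_ofReal hb] at this

end ShadowSystem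

section Shear

/-- Translation of each line in direction `v` by the value of `g` at its base point in `v^⊥`. -/
def shear (v : E) (g : E → ℝ) (x : E) : E := x + g (projPerp v x) • v

theorem projPerp_shear {v : E} (hv : v ≠ 0) (g : E → ℝ) (x : E) :
    projPerp v (shear v g x) = projPerp v x :=
  projPerp_add_smul hv x _

theorem leftInverse_shear_neg {v : E} (hv : v ≠ 0) (g : E → ℝ) :
    Function.LeftInverse (shear v (-g)) (shear v g) := fun x ↦ by
  rw [shear, projPerp_shear hv, shear, Pi.neg_apply, neg_smul, add_neg_cancel_right]

theorem rightInverse_shear_neg {v : E} (hv : v ≠ 0) (g : E → ℝ) :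
    Function.RightInverse (shear v (-g)) (shear v g) := by
  simpa only [neg_neg] using (leftInverse_shear_neg hv (-g)).rightInverse

theorem image_shear {v : E} (hv : v ≠ 0) (g : E → ℝ) (A : Set E) :
    shear v g '' A = shear v (-g) ⁻¹' A :=
  congrFun (image_eq_preimage_of_inverse (leftInverse_shear_neg hv g)
    (rightInverse_shear_neg hv g)) A

theorem image_shear_congr {v : E} {g γ : E → ℝ} {K : Set E} (h : EqOn g γ (projPerp v '' K)) :
    shear v g '' K = shear v γ '' K :=
  image_congr fun x hx ↦ by rw [shear, shear, h (mem_image_of_mem _ hx)]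

theorem chord_image_shear {v : E} (hv : v ≠ 0) (g : E → ℝ) (x : E) (A : Set E) :
    chord v x (shear v g '' A) = {g (projPerp v x)} + chord v x A := by
  ext r
  rw [mem_chord, image_shear hv, mem_preimage, singleton_add, image_add_left, mem_preimage,
    mem_chord, shear, projPerp_add_smul hv, Pi.neg_apply, add_assoc, ← add_smul, add_comm r]

variable [MeasurableSpace E] [BorelSpace E]

theorem measurable_shear [SecondCountableTopology E] (v : E) {g : E → ℝ} (hg : Measurable g) :
    Measurable (shear v g) :=
  measurable_id.add ((hg.comp (continuous_projPerp v).measurable).smul_const v)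

/-- A measurable shear as a measurable equivalence. -/
def shearEquiv [SecondCountableTopology E] {v : E} (hv : v ≠ 0) {g : E → ℝ} (hg : Measurable g) :
    E ≃ᵐ E where
  toFun := shear v g
  invFun := shear v (-g)
  left_inv := leftInverse_shear_neg hv g
  right_inv := rightInverse_shear_neg hv g
  measurable_toFun := measurable_shear v hg
  measurable_invFun := measurable_shear v hg.neg

theorem measurePreserving_shear [FiniteDimensional ℝ E] (μ : Measure E) [μ.IsAddHaarMeasure] {v : E}
    (hv : v ≠ 0) {g : E → ℝ} (hg : Measurable g) : MeasurePreserving (shear v g) μ μ := by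
  obtain ⟨ν, _, hν⟩ := exists_measurePreserving_lineCoords μ hv
  have hskew : MeasurePreserving
      (fun q : (height v).ker × ℝ ↦ (q.1, q.2 + g q.1)) (ν.prod volume) (ν.prod volume) :=
    (MeasurePreserving.id ν).skew_product
      (measurable_snd.add (hg.comp (measurable_subtype_coe.comp measurable_fst)))
      (ae_of_all _ fun y ↦ (measurePreserving_add_right volume (g y)).map_eq)
  have hsymm : MeasurePreserving (lineCoords hv).symm (ν.prod volume) μ :=
    hν.symm (lineCoords hv).toHomeomorph.toMeasurableEquiv
  convert hsymm.comp (hskew.comp hν) using 1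
  ext x
  rw [Function.comp_apply, Function.comp_apply, lineCoords_symm_apply]
  dsimp only
  rw [lineCoords_fst, lineCoords_snd, shear, add_smul, ← add_assoc, projPerp_add_height_smul]

end Shear

section Cylinder

/-- The union of all lines in direction `v` that meet `K`. -/
def lineCylinder (v : E) (K : Set E) : Set E := {x | (chord v x K).Nonempty}

theorem subset_lineCylinder (v : E) (K : Set E) : K ⊆ lineCylinder v K := fun x hx ↦
  ⟨0, by simpa [mem_chord]⟩

theorem image_projPerp_subset_lineCylinder (v : E) (K : Set E) :
    projPerp v '' K ⊆ lineCylinder v K := by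
  rintro _ ⟨x, hx, rfl⟩
  exact ⟨height v x, by rwa [mem_chord, projPerp_add_height_smul]⟩

theorem lineCylinder_image_shear {v : E} (hv : v ≠ 0) (g : E → ℝ) (K : Set E) :
    lineCylinder v (shear v g '' K) = lineCylinder v K := by
  simp only [lineCylinder, chord_image_shear hv, add_nonempty, singleton_nonempty, true_and]

theorem convexOn_sInf_chord (v : E) {A : Set E} (hA : Convex ℝ A)
    (hbdd : ∀ x, BddBelow (chord v x A)) :
    ConvexOn ℝ (lineCylinder v A) fun x ↦ sInf (chord v x A) := by
  have hne {x y : E} (hx : (chord v x A).Nonempty) (hy : (chord v y A).Nonempty) (a b : ℝ) :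
      (a • chord v x A + b • chord v y A).Nonempty := (hx.smul_set).add hy.smul_set
  refine ⟨fun x hx y hy a b ha hb hab ↦ (hne hx hy a b).mono
    (smul_chord_add_smul_chord_subset v hA x y ha hb hab), fun x hx y hy a b ha hb hab ↦ ?_⟩
  calc sInf (chord v (a • x + b • y) A)
      ≤ sInf (a • chord v x A + b • chord v y A) := csInf_le_csInf (hbdd _) (hne hx hy a b)
        (smul_chord_add_smul_chord_subset v hA x y ha hb hab)
    _ = a • sInf (chord v x A) + b • sInf (chord v y A) := by
      rw [csInf_add hx.smul_set ((hbdd x).smul_of_nonneg ha) hy.smul_set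
        ((hbdd y).smul_of_nonneg hb), Real.sInf_smul_of_nonneg ha, Real.sInf_smul_of_nonneg hb]

theorem bddBelow_chord {v : E} (hv : v ≠ 0) {A : Set E} (hA : Bornology.IsBounded A) (x : E) :
    BddBelow (chord v x A) := by
  obtain ⟨m, hm⟩ := ((height v).lipschitz.isBounded_image hA).bddBelow
  refine ⟨m - height v x, fun r hr ↦ ?_⟩
  have : m ≤ height v (x + r • v) := hm (mem_image_of_mem _ hr)
  rw [map_add, map_smul, height_self hv, smul_eq_mul, mul_one] at this
  linarith

/-- The speed is the difference of the lower envelopes of the sheared set and of the original one,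
both of which are convex functions. -/
theorem continuousOn_comp_projPerp_of_convex_image_shear [FiniteDimensional ℝ E] {v : E}
    (hv : v ≠ 0) {K : Set E} (hbdd : Bornology.IsBounded K) (hK : Convex ℝ K) {γ : E → ℝ}
    (hγ : Convex ℝ (shear v γ '' K)) :
    ContinuousOn (γ ∘ projPerp v) (interior (lineCylinder v K)) := by
  have hbelow := bddBelow_chord hv hbdd
  have hsheared := convexOn_sInf_chord v hγ fun x ↦
    chord_image_shear hv γ x K ▸ bddBelow_singleton.add (hbelow x)
  simp only [lineCylinder_image_shear hv, chord_image_shear hv] at hsheared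
  refine (hsheared.continuousOn_interior.sub
    (convexOn_sInf_chord v hK hbelow).continuousOn_interior).congr fun x hx ↦ ?_
  have hne : (chord v x K).Nonempty := interior_subset (s := lineCylinder v K) hx
  rw [Pi.sub_apply, csInf_add (singleton_nonempty _) bddBelow_singleton hne (hbelow x),
    csInf_singleton, add_sub_cancel_right, Function.comp_apply]

theorem exists_top_of_mem {v : E} (hv : v ≠ 0) {K : Set E} (hK : IsCompact K) {x : E} (hx : x ∈ K) :
    ∃ w ∈ K, projPerp v w = projPerp v x ∧ ∀ r : ℝ, w + r • v ∈ K → r ≤ 0 := by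
  obtain ⟨w, ⟨hwK, hwx⟩, hmax⟩ :=
    (hK.inter_right (isClosed_singleton.preimage (continuous_projPerp v))).exists_isMaxOn
      ⟨x, hx, rfl⟩ (height v).continuous.continuousOn
  refine ⟨w, hwK, hwx, fun r hr ↦ ?_⟩
  simpa [height_self hv] using hmax ⟨hr, (projPerp_add_smul hv w r).trans hwx⟩

theorem tendsto_zero_of_add_smul_mem {α : Type*} {f : Filter α} {v w : E} (hv : v ≠ 0) {K : Set E}
    (hK : IsCompact K) (hw : ∀ r : ℝ, w + r • v ∈ K → r ≤ 0) {y : α → E} (hy : Tendsto y f (𝓝 w))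
    {δ : α → ℝ} (hδ : ∀ a, 0 ≤ δ a) (hmem : ∀ᶠ a in f, y a + δ a • v ∈ K) :
    Tendsto δ f (𝓝 0) := by
  refine tendsto_iff_ultrafilter _ _ _ |>.2 fun g hg ↦ ?_
  obtain ⟨k, hkK, hk : Tendsto (fun a ↦ y a + δ a • v) g (𝓝 k)⟩ :=
    hK.ultrafilter_le_nhds' (g.map fun a ↦ y a + δ a • v) (hg hmem)
  have hlim : Tendsto δ g (𝓝 (height v (k - w))) := by
    refine (((height v).continuous.tendsto _).comp (hk.sub (hy.mono_left hg))).congr fun a ↦ ?_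
    simp [height_self hv]
  have hkw : k = w + height v (k - w) • v :=
    tendsto_nhds_unique hk ((hy.mono_left hg).add (hlim.smul_const v))
  have hzero : height v (k - w) = 0 :=
    (hw _ (by rwa [← hkw])).antisymm (ge_of_tendsto' hlim hδ)
  rwa [hzero] at hlim

end Cylinder

section SRSMove

theorem smul_mem_interior_of_mem_closure {V : Type*} [AddCommGroup V] [Module ℝ V]
    [TopologicalSpace V] [IsTopologicalAddGroup V] [ContinuousConstSMul ℝ V] {A : Set V}
    (hA : Convex ℝ A) (h0 : (0 : V) ∈ interior A) {x : V} (hx : x ∈ closure A) {l : ℝ}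
    (hl : l ∈ Ico 0 1) : l • x ∈ interior A := by
  simpa using hA.combo_interior_closure_mem_interior h0 hx (sub_pos.2 hl.2) hl.1
    (sub_add_cancel 1 l)

theorem tendsto_smul_nhdsLT_one {V : Type*} [AddCommGroup V] [Module ℝ V] [TopologicalSpace V]
    [ContinuousSMul ℝ V] (y : V) : Tendsto (fun l : ℝ ↦ l • y) (𝓝[<] 1) (𝓝 y) :=
  ((continuous_id.smul continuous_const).tendsto' 1 y (one_smul ℝ y)).mono_left nhdsWithin_le_nhds

theorem IsSymConvexBody.neg_mem {K : Set E} (hK : IsSymConvexBody K) {x : E} (hx : x ∈ K) :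
    -x ∈ K := by
  rw [hK.2.2.2] at hx
  exact hx

theorem IsSymConvexBody.zero_mem_interior {K : Set E} (hK : IsSymConvexBody K) :
    (0 : E) ∈ interior K := by
  obtain ⟨x, hx⟩ := hK.2.2.1
  have := hK.2.1.combo_interior_self_mem_interior hx (hK.neg_mem (interior_subset hx))
    (one_half_pos (α := ℝ)) one_half_pos.le (add_halves 1)
  rwa [smul_neg, add_neg_cancel] at this

/-- The time `±1` part of an SRS-movement of `K` with direction `v` and speed `γ`: only
the convexity of the two extreme bodies is recorded. -/
structure IsSRSMove (K : Set E) (v : E) (γ : E → ℝ) : Prop where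
  body : IsSymConvexBody K
  ne_zero : v ≠ 0
  odd : ∀ x ∈ projPerp v '' K, γ (-x) = -γ x
  convex_image : Convex ℝ (shear v γ '' K)
  convex_image_neg : Convex ℝ (shear v (-γ) '' K)

namespace IsSRSMove

variable {K : Set E} {v : E} {γ : E → ℝ}

theorem neg (h : IsSRSMove K v γ) : IsSRSMove K v (-γ) where
  body := h.body
  ne_zero := h.ne_zero
  odd x hx := congrArg Neg.neg (h.odd x hx)
  convex_image := h.convex_image_neg
  convex_image_neg := (neg_neg γ).symm ▸ h.convex_image

theorem zero_mem (h : IsSRSMove K v γ) : (0 : E) ∈ K := interior_subset h.body.zero_mem_interior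

theorem map_zero (h : IsSRSMove K v γ) : γ 0 = 0 := by
  have := h.odd 0 ⟨0, h.zero_mem, projPerp_zero v⟩
  rw [neg_zero] at this
  linarith

theorem shear_zero (h : IsSRSMove K v γ) : shear v γ 0 = 0 := by
  rw [shear, projPerp_zero, h.map_zero, zero_smul, add_zero]

theorem zero_mem_image (h : IsSRSMove K v γ) : (0 : E) ∈ shear v γ '' K :=
  ⟨0, h.zero_mem, h.shear_zero⟩

theorem smul_add_smul_mem (h : IsSRSMove K v γ) {x : E} (hx : x ∈ K) {l : ℝ} (hl : l ∈ Icc 0 1) :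
    l • x + (l * γ (projPerp v x) - γ (l • projPerp v x)) • v ∈ K := by
  have hmem : l • shear v γ x ∈ shear v γ '' K :=
    h.convex_image.smul_mem_of_zero_mem h.zero_mem_image (mem_image_of_mem _ hx) hl
  rw [image_shear h.ne_zero, mem_preimage, shear, projPerp_smul, projPerp_shear h.ne_zero] at hmem
  convert hmem using 1
  rw [shear, Pi.neg_apply]
  module

theorem tendsto_smul (h : IsSRSMove K v γ) {y : E} (hy : y ∈ projPerp v '' K) :
    Tendsto (fun l : ℝ ↦ γ (l • y)) (𝓝[<] 1) (𝓝 (γ y)) := by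
  obtain ⟨x, hx, rfl⟩ := hy
  obtain ⟨w, hwK, hwx, htop⟩ := exists_top_of_mem h.ne_zero h.body.1 hx
  rw [← hwx]
  set Δ : ℝ → ℝ := fun l ↦ l * γ (projPerp v w) - γ (l • projPerp v w) with hΔ_def
  have hmem {l : ℝ} (hl : l ∈ Icc 0 1) : l • w + |Δ l| • v ∈ K := by
    rcases abs_choice (Δ l) with hpos | hneg
    · rw [hpos]
      exact h.smul_add_smul_mem hwK hl
    · rw [hneg]
      convert h.neg.smul_add_smul_mem hwK hl using 3
      simp only [hΔ_def, Pi.neg_apply]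
      ring
  have hΔ : Tendsto Δ (𝓝[<] 1) (𝓝 0) := by
    refine (tendsto_zero_iff_abs_tendsto_zero Δ).2 (tendsto_zero_of_add_smul_mem h.ne_zero h.body.1
      htop (tendsto_smul_nhdsLT_one w) (fun l ↦ abs_nonneg (Δ l)) ?_)
    filter_upwards [Ioo_mem_nhdsLT zero_lt_one] with l hl
    exact hmem (Ioo_subset_Icc_self hl)
  simpa [hΔ_def] using (tendsto_smul_nhdsLT_one (γ (projPerp v w))).sub hΔ

variable [FiniteDimensional ℝ E]

theorem continuousOn_lineCylinder (h : IsSRSMove K v γ) :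
    ContinuousOn (γ ∘ projPerp v) (interior (lineCylinder v K)) :=
  continuousOn_comp_projPerp_of_convex_image_shear h.ne_zero h.body.1.isBounded h.body.2.1
    h.convex_image

theorem continuousOn_interior (h : IsSRSMove K v γ) :
    ContinuousOn (γ ∘ projPerp v) (interior K) :=
  h.continuousOn_lineCylinder.mono (interior_mono (subset_lineCylinder v K))

theorem continuousOn_smul (h : IsSRSMove K v γ) {l : ℝ} (hl : l ∈ Ico 0 1) :
    ContinuousOn (fun y ↦ γ (l • y)) (projPerp v '' K) := by
  have hcyl : Convex ℝ (lineCylinder v K) :=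
    (convexOn_sInf_chord v h.body.2.1 (bddBelow_chord h.ne_zero h.body.1.isBounded)).1
  have hmaps : MapsTo (fun y ↦ l • y) (projPerp v '' K) (interior (lineCylinder v K)) :=
    fun y hy ↦ smul_mem_interior_of_mem_closure hcyl
      (interior_mono (subset_lineCylinder v K) h.body.zero_mem_interior)
      (subset_closure (image_projPerp_subset_lineCylinder v K hy)) hl
  refine (h.continuousOn_lineCylinder.comp (continuous_const_smul l).continuousOn hmaps).congr ?_
  rintro _ ⟨x, -, rfl⟩
  simp [projPerp_smul, projPerp_projPerp h.ne_zero]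

theorem exists_measurable_eqOn [MeasurableSpace E] [BorelSpace E] (h : IsSRSMove K v γ) :
    ∃ g : E → ℝ, Measurable g ∧ EqOn g γ (projPerp v '' K) := by
  classical
  have hmeas : MeasurableSet (projPerp v '' K) :=
    (h.body.1.image (continuous_projPerp v)).measurableSet
  obtain ⟨l, -, hl, hlim⟩ := exists_seq_strictMono_tendsto' (zero_lt_one (α := ℝ))
  refine ⟨(projPerp v '' K).indicator γ, ?_, eqOn_indicator⟩
  refine measurable_of_tendsto_metrizable (f := fun k ↦
    (projPerp v '' K).indicator fun y ↦ γ (l k • y)) (fun k ↦ ?_) (tendsto_pi_nhds.2 fun y ↦ ?_)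
  · rw [← piecewise_eq_indicator]
    exact (h.continuousOn_smul (Ioo_subset_Ico_self (hl k))).measurable_piecewise
      continuousOn_const hmeas
  · by_cases hy : y ∈ projPerp v '' K
    · simp only [indicator_of_mem hy]
      exact (h.tendsto_smul hy).comp
        (tendsto_nhdsWithin_iff.2 ⟨hlim, Eventually.of_forall fun k ↦ (hl k).2⟩)
    · simp [indicator_of_notMem hy]

theorem image_mem_nhds_zero (h : IsSRSMove K v γ) : shear v γ '' K ∈ 𝓝 0 := by
  have hγ : ContinuousAt ((-γ) ∘ projPerp v) 0 :=
    h.neg.continuousOn_interior.continuousAt (isOpen_interior.mem_nhds h.body.zero_mem_interior)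
  have hshear : ContinuousAt (shear v (-γ)) 0 := continuousAt_id.add (hγ.smul continuousAt_const)
  rw [image_shear h.ne_zero]
  refine hshear.preimage_mem_nhds ?_
  rw [h.neg.shear_zero]
  exact mem_interior_iff_mem_nhds.1 h.body.zero_mem_interior

theorem isBounded_image (h : IsSRSMove K v γ) : Bornology.IsBounded (shear v γ '' K) := by
  have hcompact : IsCompact ((fun y ↦ γ ((1 / 2 : ℝ) • y)) '' (projPerp v '' K)) :=
    (h.body.1.image (continuous_projPerp v)).image_of_continuousOn
      (h.continuousOn_smul (by norm_num))
  have hline : Bornology.IsBounded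
      ((fun r : ℝ ↦ r • v) '' ((fun y ↦ γ ((1 / 2 : ℝ) • y)) '' (projPerp v '' K))) :=
    (hcompact.image (by fun_prop)).isBounded
  refine ((h.body.1.isBounded.add hline).smul₀ (2 : ℝ)).subset ?_
  rintro _ ⟨x, hx, rfl⟩
  refine ⟨_, add_mem_add (h.smul_add_smul_mem hx (l := 1 / 2) (by norm_num))
    (mem_image_of_mem _ (mem_image_of_mem _ (mem_image_of_mem _ hx))), ?_⟩
  simp only [shear]
  module

theorem isClosed_image (h : IsSRSMove K v γ) : IsClosed (shear v γ '' K) := by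
  refine isClosed_of_closure_subset fun z hz ↦ ?_
  have hmem : ∀ᶠ l : ℝ in 𝓝[<] 1, shear v (-γ) (l • z) ∈ K := by
    filter_upwards [Ioo_mem_nhdsLT zero_lt_one] with l hl
    have : l • z ∈ shear v γ '' K := interior_subset <| smul_mem_interior_of_mem_closure
      h.convex_image (mem_interior_iff_mem_nhds.2 h.image_mem_nhds_zero) hz
      (Ioo_subset_Ico_self hl)
    rwa [image_shear h.ne_zero] at this
  have hproj : projPerp v z ∈ projPerp v '' K := by
    refine (h.body.1.image (continuous_projPerp v)).isClosed.mem_of_tendsto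
      (tendsto_smul_nhdsLT_one _) ?_
    filter_upwards [hmem] with l hl
    exact ⟨_, hl, by rw [projPerp_shear h.ne_zero, projPerp_smul]⟩
  rw [image_shear h.ne_zero]
  refine h.body.1.isClosed.mem_of_tendsto ?_ hmem
  simpa only [shear, projPerp_smul] using
    (tendsto_smul_nhdsLT_one z).add ((h.neg.tendsto_smul hproj).smul_const v)

theorem isSymConvexBody_image (h : IsSRSMove K v γ) : IsSymConvexBody (shear v γ '' K) := by
  have hneg (x : E) (hx : x ∈ K) : -shear v γ x = shear v γ (-x) := by
    rw [shear, shear, projPerp_neg, h.odd _ (mem_image_of_mem _ hx), neg_smul, neg_add]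
  have hsubset : shear v γ '' K ⊆ -(shear v γ '' K) := by
    rintro _ ⟨x, hx, rfl⟩
    exact ⟨-x, h.body.neg_mem hx, (hneg x hx).symm⟩
  exact ⟨Metric.isCompact_of_isClosed_isBounded h.isClosed_image h.isBounded_image, h.convex_image,
    ⟨0, mem_interior_iff_mem_nhds.2 h.image_mem_nhds_zero⟩,
    hsubset.antisymm (neg_subset.2 hsubset)⟩

end IsSRSMove

end SRSMove

section RandomHull

variable {κ : Type*}

theorem preimage_shear_comp_pi {v : E} (hv : v ≠ 0) (g : E → ℝ) (K : Set E) :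
    (fun x : κ → E ↦ shear v g ∘ x) ⁻¹' (univ.pi fun _ ↦ shear v g '' K) = univ.pi fun _ ↦ K := by
  ext x
  simp only [mem_preimage, mem_univ_pi, Function.comp_apply,
    (leftInverse_shear_neg hv g).injective.mem_set_image]

theorem eqOn_shear_comp {v : E} {g γ : E → ℝ} {K : Set E} (h : EqOn g γ (projPerp v '' K)) :
    EqOn (fun x : κ → E ↦ shear v g ∘ x) (fun x ↦ shear v γ ∘ x) (univ.pi fun _ ↦ K) :=
  fun x hx ↦ funext fun i ↦ congrArg (x i + · • v) (h (mem_image_of_mem _ (hx i (mem_univ i))))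

theorem IsSRSMove.continuousOn_shear_comp [FiniteDimensional ℝ E] {K : Set E} {v : E}
    {γ : E → ℝ} (h : IsSRSMove K v γ) :
    ContinuousOn (fun x : κ → E ↦ shear v γ ∘ x) (univ.pi fun _ ↦ interior K) := by
  have hshear : ContinuousOn (shear v γ) (interior K) :=
    continuousOn_id.add (h.continuousOn_interior.smul continuousOn_const)
  exact continuousOn_pi.2 fun i ↦
    hshear.comp (continuous_apply i).continuousOn fun x hx ↦ hx i (mem_univ i)

theorem measurableEmbedding_shear_comp [Countable κ] [MeasurableSpace E] [BorelSpace E]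
    [SecondCountableTopology E] {v : E} (hv : v ≠ 0) {g : E → ℝ} (hg : Measurable g) :
    MeasurableEmbedding fun x : κ → E ↦ shear v g ∘ x :=
  (MeasurableEquiv.piCongrRight fun _ ↦ shearEquiv hv hg).measurableEmbedding

variable [Fintype κ] {F : Type*} [NormedAddCommGroup F] [NormedSpace ℝ F]

/-- The linear combination of the points `x i` as a function of its coefficients. For a suitable
fixed set `C` of coefficients, `pointComb x '' C` is the convex hull of the points `x i`, or of
the points `± x i`. -/
def pointComb (x : κ → F) : (κ → ℝ) →L[ℝ] F := ∑ i, (ContinuousLinearMap.proj i).smulRight (x i)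

theorem pointComb_apply (x : κ → F) (c : κ → ℝ) : pointComb x c = ∑ i, c i • x i := by
  simp [pointComb]

open Classical in
/-- The standard basis of `κ → ℝ`; its convex hull and the convex hull of its union with its
negative are the coefficient sets behind `momentU` and `momentV`. -/
def unitVectors (κ : Type*) : Set (κ → ℝ) := range fun i ↦ Pi.single i 1

theorem finite_unitVectors (κ : Type*) [Finite κ] : (unitVectors κ).Finite := finite_range _

theorem pointComb_image_unitVectors (x : κ → F) : pointComb x '' unitVectors κ = range x := by
  classical
  rw [unitVectors, ← range_comp]
  congr 1
  ext1 i
  rw [Function.comp_apply, pointComb_apply, Finset.sum_eq_single i] <;> simp +contextual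

theorem continuous_pointComb : Continuous (pointComb : (κ → F) → (κ → ℝ) →L[ℝ] F) :=
  continuous_finsetSum _ fun i _ ↦
    (ContinuousLinearMap.smulRightL ℝ (κ → ℝ) F (.proj i)).continuous.comp (continuous_apply i)

theorem pointComb_shear (v : E) (t : ℝ) (g : E → ℝ) (x : κ → E) :
    pointComb (shear v (t • g) ∘ x) =
      pointComb x + t • (pointComb fun i ↦ g (projPerp v (x i))).smulRight v := by
  ext1 c
  simp only [pointComb_apply, shear, Function.comp_apply, Pi.smul_apply, add_apply, smul_apply,
    ContinuousLinearMap.smulRight_apply, smul_add, Finset.sum_add_distrib, Finset.sum_smul,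
    Finset.smul_sum, smul_smul, smul_eq_mul, mul_left_comm]

theorem pointComb_image_convexHull_unitVectors (x : κ → F) :
    pointComb x '' convexHull ℝ (unitVectors κ) = convexHull ℝ (range x) := by
  refine ((pointComb x).toLinearMap.image_convexHull _).trans ?_
  rw [ContinuousLinearMap.coe_coe, pointComb_image_unitVectors]

theorem pointComb_image_convexHull_unitVectors_union_neg (x : κ → F) :
    pointComb x '' convexHull ℝ (unitVectors κ ∪ -unitVectors κ) =
      convexHull ℝ (range x ∪ -range x) := by
  refine ((pointComb x).toLinearMap.image_convexHull _).trans ?_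
  rw [ContinuousLinearMap.coe_coe, image_union, image_neg_of_apply_neg_eq_neg,
    pointComb_image_unitVectors]
  exact fun c _ ↦ map_neg (pointComb x) c

variable [MeasurableSpace E] (μ : Measure E)

/-- The `p`-th power of the volume of `pointComb x '' C`, normalised by the volume of `K`. -/
def hullVolumePow (C : Set (κ → ℝ)) (K : Set E) (p : ℝ) (x : κ → E) : ℝ :=
  (μ.real (pointComb x '' C) / μ.real K) ^ p

/-- The expectation of `hullVolumePow` for independent points uniformly distributed in `K`. -/
def hullMoment (C : Set (κ → ℝ)) (K : Set E) (p : ℝ) : ℝ :=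
  (∫ x in univ.pi fun _ ↦ K, hullVolumePow μ C K p x ∂Measure.pi fun _ ↦ μ) /
    μ.real K ^ Fintype.card κ

theorem momentU_eq_hullMoment {n N : ℕ} (K : Set (EuclideanSpace ℝ (Fin n))) (p : ℝ) :
    momentU n N K p = hullMoment volume (convexHull ℝ (unitVectors (Fin N))) K p := by
  simp only [momentU, hullMoment, hullVolumePow, pointComb_image_convexHull_unitVectors,
    Fintype.card_fin, Measure.real, volume_pi, Set.pi, mem_univ, true_imp_iff]

theorem momentV_eq_hullMoment {n N : ℕ} (K : Set (EuclideanSpace ℝ (Fin n))) (p : ℝ) :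
    momentV n N K p =
      hullMoment volume (convexHull ℝ (unitVectors (Fin N) ∪ -unitVectors (Fin N))) K p := by
  simp only [momentV, hullMoment, hullVolumePow, pointComb_image_convexHull_unitVectors_union_neg,
    Fintype.card_fin, Measure.real, volume_pi, Set.pi, mem_univ, true_imp_iff]

theorem hullVolumePow_nonneg (C : Set (κ → ℝ)) (K : Set E) (p : ℝ) (x : κ → E) :
    0 ≤ hullVolumePow μ C K p x :=
  Real.rpow_nonneg (div_nonneg measureReal_nonneg measureReal_nonneg) p

theorem hullVolumePow_eq_zero_iff [IsFiniteMeasureOnCompacts μ] {C : Set (κ → ℝ)}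
    (hC : IsCompact C) {K : Set E} (hK : 0 < μ.real K) {p : ℝ} (hp : p ≠ 0) {x : κ → E} :
    hullVolumePow μ C K p x = 0 ↔ μ (pointComb x '' C) = 0 := by
  rw [hullVolumePow, Real.rpow_eq_zero (div_nonneg measureReal_nonneg hK.le) hp,
    div_eq_zero_iff, or_iff_left hK.ne',
    measureReal_eq_zero_iff (hC.image (pointComb x).continuous).measure_lt_top.ne]

theorem IsSymConvexBody.measureReal_pos [μ.IsOpenPosMeasure] [IsFiniteMeasureOnCompacts μ]
    {K : Set E} (hK : IsSymConvexBody K) : 0 < μ.real K :=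
  ENNReal.toReal_pos (Measure.measure_pos_of_nonempty_interior μ hK.2.2.1).ne'
    hK.1.measure_lt_top.ne

variable [BorelSpace E] [FiniteDimensional ℝ E] [μ.IsAddHaarMeasure]

theorem continuous_hullVolumePow {C : Set (κ → ℝ)} (hC : IsCompact C) (hconv : Convex ℝ C)
    (K : Set E) {p : ℝ} (hp : 0 ≤ p) : Continuous (hullVolumePow μ C K p) :=
  (((continuous_measureReal_image μ hC hconv).comp continuous_pointComb).div_const _).rpow_const
    fun _ ↦ .inr hp

theorem two_mul_hullVolumePow_le {C : Set (κ → ℝ)} (hC : IsCompact C) (hconv : Convex ℝ C)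
    (K : Set E) {v : E} (hv : v ≠ 0) (g : E → ℝ) (x : κ → E) {p : ℝ} (hp : 1 ≤ p) :
    2 * hullVolumePow μ C K p x ≤
      hullVolumePow μ C K p (shear v g ∘ x) + hullVolumePow μ C K p (shear v (-g) ∘ x) := by
  set f : ℝ → ℝ := fun t ↦ μ.real (pointComb (shear v (t • g) ∘ x) '' C) / μ.real K with hf
  have hf0 (t : ℝ) : 0 ≤ f t := div_nonneg measureReal_nonneg measureReal_nonneg
  have hconvex : ConvexOn ℝ univ f := by
    simp only [hf, pointComb_shear, div_eq_inv_mul]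
    exact (convexOn_measureReal_shadowSystem μ hC hconv _ _ hv).smul
      (inv_nonneg.2 measureReal_nonneg)
  have hmid : f 0 ≤ (1 / 2 : ℝ) • f 1 + (1 / 2 : ℝ) • f (-1) := by
    simpa using
      hconvex.2 (mem_univ 1) (mem_univ (-1)) one_half_pos.le one_half_pos.le (add_halves 1)
  have hpow : f 0 ^ p ≤ (1 / 2 : ℝ) • f 1 ^ p + (1 / 2 : ℝ) • f (-1) ^ p :=
    (Real.rpow_le_rpow (hf0 0) hmid (zero_le_one.trans hp)).trans
      ((convexOn_rpow hp).2 (hf0 1) (hf0 (-1)) one_half_pos.le one_half_pos.le (add_halves 1))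
  have hx : shear v 0 ∘ x = x := by ext1 i; simp [shear]
  simp only [hf, zero_smul, one_smul, neg_smul, hx, smul_eq_mul] at hpow
  simp only [hullVolumePow]
  linarith

theorem measureReal_image_shear {v : E} (hv : v ≠ 0) {g : E → ℝ} (hg : Measurable g) (K : Set E) :
    μ.real (shear v g '' K) = μ.real K := by
  rw [image_shear hv]
  exact congrArg ENNReal.toReal ((measurePreserving_shear μ hv hg.neg).measure_preimage_emb
    (shearEquiv hv hg.neg).measurableEmbedding K)

theorem measurePreserving_shear_comp {v : E} (hv : v ≠ 0) {g : E → ℝ} (hg : Measurable g) :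
    MeasurePreserving (fun x : κ → E ↦ shear v g ∘ x) (.pi fun _ ↦ μ) (.pi fun _ ↦ μ) :=
  measurePreserving_pi _ _ fun _ ↦ measurePreserving_shear μ hv hg

theorem setIntegral_pi_image_shear {v : E} (hv : v ≠ 0) {g : E → ℝ} (hg : Measurable g) (K : Set E)
    (f : (κ → E) → ℝ) :
    ∫ x in univ.pi fun _ ↦ shear v g '' K, f x ∂Measure.pi (fun _ ↦ μ) =
      ∫ x in univ.pi fun _ ↦ K, f (shear v g ∘ x) ∂Measure.pi fun _ ↦ μ := by
  rw [← preimage_shear_comp_pi hv g K]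
  exact ((measurePreserving_shear_comp μ hv hg).setIntegral_preimage_emb
    (measurableEmbedding_shear_comp hv hg) f _).symm

theorem integrableOn_pi_comp_shear {v : E} (hv : v ≠ 0) {g : E → ℝ} (hg : Measurable g) {K : Set E}
    (hK : IsCompact (shear v g '' K)) {f : (κ → E) → ℝ} (hf : Continuous f) :
    IntegrableOn (fun x ↦ f (shear v g ∘ x)) (univ.pi fun _ ↦ K) (.pi fun _ ↦ μ) := by
  rw [← preimage_shear_comp_pi hv g K]
  exact ((measurePreserving_shear_comp μ hv hg).integrableOn_comp_preimage
    (measurableEmbedding_shear_comp hv hg)).2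
      (hf.continuousOn.integrableOn_compact (isCompact_univ_pi fun _ ↦ hK))

namespace IsSRSMove

variable {μ} {C : Set (κ → ℝ)} {K : Set E} {v : E} {γ : E → ℝ} {p : ℝ}

theorem integrableOn_comp_shear (h : IsSRSMove K v γ) {f : (κ → E) → ℝ} (hf : Continuous f) :
    IntegrableOn (fun x ↦ f (shear v γ ∘ x)) (univ.pi fun _ ↦ K) (.pi fun _ ↦ μ) := by
  obtain ⟨g, hg, hgγ⟩ := h.exists_measurable_eqOn
  have hcompact : IsCompact (shear v g '' K) := image_shear_congr hgγ ▸ h.isSymConvexBody_image.1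
  refine ((integrableOn_pi_comp_shear μ h.ne_zero hg hcompact hf).congr_fun
    ((eqOn_shear_comp hgγ).comp_left (g := f)) ?_)
  exact .univ_pi fun _ ↦ h.body.1.measurableSet

theorem setIntegral_comp_shear_le (h : IsSRSMove K v γ)
    (hmax : ∀ K', IsSymConvexBody K' → hullMoment μ C K' p ≤ hullMoment μ C K p) :
    ∫ x in univ.pi fun _ ↦ K, hullVolumePow μ C K p (shear v γ ∘ x) ∂Measure.pi (fun _ ↦ μ) ≤
      ∫ x in univ.pi fun _ ↦ K, hullVolumePow μ C K p x ∂Measure.pi fun _ ↦ μ := by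
  obtain ⟨g, hg, hgγ⟩ := h.exists_measurable_eqOn
  have hvol : μ.real (shear v g '' K) = μ.real K := measureReal_image_shear μ h.ne_zero hg K
  have hpow : hullVolumePow μ C (shear v g '' K) p = hullVolumePow μ C K p := by
    simp only [funext_iff, hullVolumePow, hvol, implies_true]
  have hle := hmax _ h.isSymConvexBody_image
  rw [← image_shear_congr hgγ, hullMoment, hullMoment, hvol, hpow,
    div_le_div_iff_of_pos_right (pow_pos (h.body.measureReal_pos μ) _),
    setIntegral_pi_image_shear μ h.ne_zero hg] at hle
  refine (setIntegral_congr_fun (.univ_pi fun _ ↦ h.body.1.measurableSet) ?_).symm.trans_le hle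
  exact (eqOn_shear_comp hgγ).comp_left (g := hullVolumePow μ C K p)

theorem two_mul_hullVolumePow_ae_eq (h : IsSRSMove K v γ) (hC : IsCompact C) (hconv : Convex ℝ C)
    (hp : 1 ≤ p) (hmax : ∀ K', IsSymConvexBody K' → hullMoment μ C K' p ≤ hullMoment μ C K p) :
    (fun x ↦ 2 * hullVolumePow μ C K p x)
      =ᵐ[(Measure.pi fun _ ↦ μ).restrict (univ.pi fun _ ↦ K)] fun x ↦
        hullVolumePow μ C K p (shear v γ ∘ x) + hullVolumePow μ C K p (shear v (-γ) ∘ x) := by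
  have hcont := continuous_hullVolumePow μ hC hconv K (zero_le_one.trans hp)
  have hint : IntegrableOn (fun x ↦ 2 * hullVolumePow μ C K p x) (univ.pi fun _ ↦ K)
      (.pi fun _ ↦ μ) :=
    (hcont.continuousOn.integrableOn_compact (isCompact_univ_pi fun _ ↦ h.body.1)).const_mul 2
  have hint_pos := h.integrableOn_comp_shear (μ := μ) hcont
  have hint_neg := h.neg.integrableOn_comp_shear (μ := μ) hcont
  have hle (x : κ → E) := two_mul_hullVolumePow_le μ hC hconv K h.ne_zero γ x hp
  refine (integral_eq_iff_of_ae_le hint (hint_pos.add hint_neg) (ae_of_all _ hle)).1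
    (le_antisymm (integral_mono hint (hint_pos.add hint_neg) hle) ?_)
  rw [integral_add' hint_pos hint_neg, integral_const_mul, two_mul]
  exact add_le_add (h.setIntegral_comp_shear_le hmax) (h.neg.setIntegral_comp_shear_le hmax)

theorem two_mul_hullVolumePow_eq (h : IsSRSMove K v γ) (hC : IsCompact C) (hconv : Convex ℝ C)
    (hp : 1 ≤ p) (hmax : ∀ K', IsSymConvexBody K' → hullMoment μ C K' p ≤ hullMoment μ C K p)
    {x : κ → E} (hx : ∀ i, x i ∈ interior K) :
    2 * hullVolumePow μ C K p x =
      hullVolumePow μ C K p (shear v γ ∘ x) + hullVolumePow μ C K p (shear v (-γ) ∘ x) := by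
  have hcont := continuous_hullVolumePow μ hC hconv K (zero_le_one.trans hp)
  have hae := ae_restrict_of_ae_restrict_of_subset (pi_mono fun _ _ ↦ interior_subset)
    (h.two_mul_hullVolumePow_ae_eq hC hconv hp hmax)
  exact Measure.eqOn_open_of_ae_eq hae (isOpen_set_pi finite_univ fun _ _ ↦ isOpen_interior)
    (continuous_const.mul hcont).continuousOn
    ((hcont.comp_continuousOn h.continuousOn_shear_comp).add
      (hcont.comp_continuousOn h.neg.continuousOn_shear_comp)) fun i _ ↦ hx i

theorem measure_pointComb_shear_eq_zero (h : IsSRSMove K v γ) (hC : IsCompact C)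
    (hconv : Convex ℝ C) (hp : 1 ≤ p)
    (hmax : ∀ K', IsSymConvexBody K' → hullMoment μ C K' p ≤ hullMoment μ C K p)
    {x : κ → E} (hx : ∀ i, x i ∈ interior K) (hzero : μ (pointComb x '' C) = 0) :
    μ (pointComb (shear v γ ∘ x) '' C) = 0 := by
  have hiff {y : κ → E} := hullVolumePow_eq_zero_iff μ hC (h.body.measureReal_pos μ)
    (zero_lt_one.trans_le hp).ne' (x := y)
  have heq := h.two_mul_hullVolumePow_eq hC hconv hp hmax hx
  rw [hiff.2 hzero, mul_zero] at heq
  exact hiff.1 ((add_eq_zero_iff_of_nonneg (hullVolumePow_nonneg μ C K p _)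
    (hullVolumePow_nonneg μ C K p _)).1 heq.symm).1

end IsSRSMove

end RandomHull

section Rigidity

theorem exists_smul_mem_of_mem_nhds_zero {V : Type*} [AddCommGroup V] [Module ℝ V]
    [TopologicalSpace V] [ContinuousSMul ℝ V] {U : Set V} (hU : U ∈ 𝓝 0) (x : V) :
    ∃ t ∈ Ioo (0 : ℝ) 1, t • x ∈ U := by
  have hlim : Tendsto (fun t : ℝ ↦ t • x) (𝓝[>] 0) (𝓝 0) :=
    ((continuous_id.smul continuous_const).tendsto' 0 0 (zero_smul ℝ x)).mono_left
      nhdsWithin_le_nhds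
  obtain ⟨t, htU, ht⟩ := ((hlim.eventually_mem hU).and (Ioo_mem_nhdsGT one_pos)).exists
  exact ⟨t, ht, htU⟩

theorem exists_basis_mem_nhds_zero {V : Type*} [AddCommGroup V] [Module ℝ V] [TopologicalSpace V]
    [ContinuousSMul ℝ V] (W : Submodule ℝ V) [FiniteDimensional ℝ W] {U : Set V} (hU : U ∈ 𝓝 0) :
    ∃ b : Module.Basis (Fin (Module.finrank ℝ W)) ℝ W, ∀ i, (b i : V) ∈ U := by
  choose t ht htU using fun i ↦
    exists_smul_mem_of_mem_nhds_zero hU (Module.finBasis ℝ W i : V)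
  refine ⟨(Module.finBasis ℝ W).isUnitSMul fun i ↦ (ht i).1.ne'.isUnit, fun i ↦ ?_⟩
  rw [Module.Basis.isUnitSMul_apply]
  exact htU i

theorem exists_surjective_of_card_le {ι κ : Type*} [Fintype ι] [Fintype κ] [Nonempty ι]
    (h : Fintype.card ι ≤ Fintype.card κ) : ∃ f : κ → ι, Function.Surjective f :=
  have ⟨e⟩ := Function.Embedding.nonempty_of_card_le h
  ⟨Function.invFun e, Function.invFun_surjective e.injective⟩

theorem eq_top_of_graph_le {k V : Type*} [Field k] [AddCommGroup V] [Module k V]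
    {S : Submodule k V} {m ℓ : V →ₗ[k] k} {v x : V} {r : k} (hmv : m v ≠ 0)
    (hgraph : ∀ z, m z = 0 → z + ℓ z • v ∈ S) (hx : m x = 0) (hxr : x + r • v ∈ S)
    (hr : r ≠ ℓ x) : S = ⊤ := by
  have hv : v ∈ S := by
    have hdiff : (r - ℓ x) • v ∈ S := by
      convert S.sub_mem hxr (hgraph x hx) using 1
      module
    exact (S.smul_mem_iff (sub_ne_zero.2 hr)).1 hdiff
  refine Submodule.eq_top_iff'.2 fun z ↦ ?_
  have hker : m (z - (m z / m v) • v) = 0 := by simp [hmv]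
  convert S.add_mem (hgraph _ hker) (S.smul_mem (m z / m v - ℓ (z - (m z / m v) • v)) hv) using 1
  module

theorem add_smul_mem_of_basis {ι k V : Type*} [CommRing k] [AddCommGroup V] [Module k V]
    {W S : Submodule k V} (b : Module.Basis ι k W) {ℓ : V →ₗ[k] k} {v : V}
    (hb : ∀ i, (b i : V) + ℓ (b i) • v ∈ S) {z : V} (hz : z ∈ W) : z + ℓ z • v ∈ S := by
  have htop : ⊤ ≤ S.comap ((.id + ℓ.smulRight v) ∘ₗ W.subtype) := by
    rw [← b.span_eq, Submodule.span_le]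
    exact range_subset_iff.2 hb
  exact htop (Submodule.mem_top : (⟨z, hz⟩ : W) ∈ ⊤)

/-- Points `x i` in the interior of `K` that fail to span the space keep failing to do so after
they are sheared. -/
def PreservesDegeneracy (κ : Type*) (K : Set E) (v : E) (γ : E → ℝ) : Prop :=
  ∀ x : κ → E, (∀ i, x i ∈ interior K) → Submodule.span ℝ (range x) ≠ ⊤ →
    Submodule.span ℝ (range (shear v γ ∘ x)) ≠ ⊤

namespace PreservesDegeneracy

variable {κ : Type*} [Fintype κ] {K : Set E} {v : E} {γ : E → ℝ} [FiniteDimensional ℝ E]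

theorem exists_linear_of_apply_eq_zero (h : PreservesDegeneracy κ K v γ)
    (hκ : Module.finrank ℝ E ≤ Fintype.card κ) (hK : (0 : E) ∈ interior K)
    {m : Module.Dual ℝ E} (hm : m v ≠ 0) :
    ∃ ℓ : E →ₗ[ℝ] ℝ, ∀ x ∈ interior K, m x = 0 → γ (projPerp v x) = ℓ x := by
  obtain ⟨b, hb⟩ := exists_basis_mem_nhds_zero m.ker (isOpen_interior.mem_nhds hK)
  obtain ⟨ℓ, hℓ⟩ := (b.constr ℝ fun i ↦ γ (projPerp v (b i))).exists_extend
  have hℓb (i) : ℓ (b i) = γ (projPerp v (b i)) := by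
    simpa using LinearMap.congr_fun hℓ (b i)
  refine ⟨ℓ, fun x hx hmx ↦ by_contra fun hne ↦ ?_⟩
  have hm0 : m ≠ 0 := fun h0 ↦ hm (by rw [h0, LinearMap.zero_apply])
  set y : Option (Fin (Module.finrank ℝ m.ker)) → E := fun o ↦ o.elim x fun i ↦ b i
  obtain ⟨f, hf⟩ : ∃ f : κ → Option (Fin (Module.finrank ℝ m.ker)), Function.Surjective f := by
    refine exists_surjective_of_card_le ?_
    rwa [Fintype.card_option, Fintype.card_fin, Module.Dual.finrank_ker_add_one_of_ne_zero hm0]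
  have hy : ∀ o, y o ∈ interior K := Option.forall.2 ⟨hx, hb⟩
  have hspan : Submodule.span ℝ (range y) ≠ ⊤ := fun htop ↦ by
    have hle : Submodule.span ℝ (range y) ≤ m.ker := Submodule.span_le.2 <|
      range_subset_iff.2 <| Option.forall.2 ⟨hmx, fun i ↦ (b i).2⟩
    exact hm (hle (htop ▸ Submodule.mem_top : v ∈ _))
  have hne_top := h (y ∘ f) (fun i ↦ hy (f i)) (by rwa [hf.range_comp])
  rw [← Function.comp_assoc, hf.range_comp] at hne_top
  have hmem (o) : shear v γ (y o) ∈ Submodule.span ℝ (range (shear v γ ∘ y)) :=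
    Submodule.subset_span (mem_range_self o)
  have hgraph (i) : (b i : E) + ℓ (b i) • v ∈ Submodule.span ℝ (range (shear v γ ∘ y)) :=
    hℓb i ▸ hmem (some i)
  exact hne_top (eq_top_of_graph_le hm (fun z hz ↦ add_smul_mem_of_basis b hgraph hz) hmx
    (hmem none) hne)

end PreservesDegeneracy

namespace IsSRSMove

variable {κ : Type*} [Fintype κ] {K : Set E} {v : E} {γ : E → ℝ} [FiniteDimensional ℝ E]

theorem map_smul_of_preservesDegeneracy (h : IsSRSMove K v γ) (hdeg : PreservesDegeneracy κ K v γ)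
    (hκ : Module.finrank ℝ E ≤ Fintype.card κ) {x : E} (hx : x ∈ interior K) {t : ℝ}
    (ht : t ∈ Ico 0 1) : γ (t • projPerp v x) = t * γ (projPerp v x) := by
  have h0 := h.body.zero_mem_interior
  by_cases hv : v ∈ Submodule.span ℝ {x}
  · obtain ⟨c, rfl⟩ := Submodule.mem_span_singleton.1 hv
    have hproj : projPerp (c • x) x = 0 := by
      have : c • projPerp (c • x) x = 0 := by
        rw [← projPerp_smul, projPerp_eq_sub_height, height_self h.ne_zero, one_smul, sub_self]
      exact (smul_eq_zero.1 this).resolve_left (left_ne_zero_of_smul h.ne_zero)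
    rw [hproj, smul_zero, h.map_zero, mul_zero]
  · obtain ⟨m, hmv, hle⟩ := Submodule.exists_le_ker_of_notMem hv
    have hmx : m x = 0 := hle (Submodule.mem_span_singleton_self x)
    obtain ⟨ℓ, hℓ⟩ := hdeg.exists_linear_of_apply_eq_zero hκ h0 hmv
    have htx := smul_mem_interior_of_mem_closure h.body.2.1 h0
      (subset_closure (interior_subset hx)) ht
    rw [← projPerp_smul, hℓ _ htx (by rw [map_smul, hmx, smul_zero]), hℓ x hx hmx, map_smul,
      smul_eq_mul]

theorem exists_linear_of_mem_interior (h : IsSRSMove K v γ) (hdeg : PreservesDegeneracy κ K v γ)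
    (hκ : Module.finrank ℝ E ≤ Fintype.card κ) :
    ∃ ℓ : E →ₗ[ℝ] ℝ, ∀ x ∈ interior K, γ (projPerp v x) = ℓ (projPerp v x) := by
  have hheight : height v v ≠ 0 := (height_self h.ne_zero).trans_ne one_ne_zero
  obtain ⟨ℓ, hℓ⟩ := hdeg.exists_linear_of_apply_eq_zero hκ h.body.zero_mem_interior
    (m := (height v).toLinearMap) hheight
  refine ⟨ℓ, fun x hx ↦ ?_⟩
  obtain ⟨t, ht, htK⟩ := exists_smul_mem_of_mem_nhds_zero
    (isOpen_interior.mem_nhds h.body.zero_mem_interior) (projPerp v x)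
  have hproj : projPerp v (t • projPerp v x) = t • projPerp v x := by
    rw [projPerp_smul, projPerp_projPerp h.ne_zero]
  have hheight_zero : height v (t • projPerp v x) = 0 := by
    rw [map_smul, height_projPerp h.ne_zero, smul_zero]
  have hsmall := hℓ _ htK hheight_zero
  rw [hproj, h.map_smul_of_preservesDegeneracy hdeg hκ hx (Ioo_subset_Ico_self ht), map_smul,
    smul_eq_mul] at hsmall
  exact mul_left_cancel₀ ht.1.ne' hsmall

theorem exists_linear_of_preservesDegeneracy (h : IsSRSMove K v γ)
    (hdeg : PreservesDegeneracy κ K v γ) (hκ : Module.finrank ℝ E ≤ Fintype.card κ) :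
    ∃ ℓ : E →ₗ[ℝ] ℝ, ∀ y ∈ projPerp v '' K, γ y = ℓ y := by
  obtain ⟨ℓ, hℓ⟩ := h.exists_linear_of_mem_interior hdeg hκ
  refine ⟨ℓ, fun y hy ↦ tendsto_nhds_unique (h.tendsto_smul hy) ?_⟩
  refine ((ℓ.continuous_of_finiteDimensional.tendsto y).comp
    (tendsto_smul_nhdsLT_one y)).congr' ?_
  obtain ⟨x, hx, rfl⟩ := hy
  filter_upwards [Ioo_mem_nhdsLT zero_lt_one] with l hl
  have hlx := smul_mem_interior_of_mem_closure h.body.2.1 h.body.zero_mem_interior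
    (subset_closure hx) (Ioo_subset_Ico_self hl)
  simpa only [projPerp_smul, Function.comp_apply] using (hℓ _ hlx).symm

variable [MeasurableSpace E] [BorelSpace E] {μ : Measure E} [μ.IsAddHaarMeasure] {p : ℝ}

theorem preservesDegeneracy_of_forall_hullMoment_le {N : ℕ} (h : IsSRSMove K v γ) (hp : 1 ≤ p)
    (hmax : ∀ K', IsSymConvexBody K' →
      hullMoment μ (convexHull ℝ (unitVectors (Fin (N + 1)))) K' p ≤
        hullMoment μ (convexHull ℝ (unitVectors (Fin (N + 1)))) K p) :
    PreservesDegeneracy (Fin N) K v γ := by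
  intro x hx hspan
  have hiff (y : Fin N → E) :
      μ (pointComb (Fin.cons 0 y : Fin (N + 1) → E) '' convexHull ℝ (unitVectors (Fin (N + 1)))) = 0
        ↔ Submodule.span ℝ (range y) ≠ ⊤ := by
    rw [pointComb_image_convexHull_unitVectors, Fin.range_cons, measure_convexHull_eq_zero_iff μ
      (subset_convexHull ℝ _ (mem_insert _ _)), Submodule.span_insert_zero]
  have hcons : shear v γ ∘ (Fin.cons 0 x : Fin (N + 1) → E) = Fin.cons 0 (shear v γ ∘ x) := by
    rw [Fin.comp_cons, h.shear_zero]
  rw [← hiff, ← hcons]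
  exact h.measure_pointComb_shear_eq_zero ((finite_unitVectors _).isCompact_convexHull ℝ)
    (convex_convexHull ℝ _) hp hmax (Fin.forall_fin_succ.2 ⟨h.body.zero_mem_interior, hx⟩)
    ((hiff x).2 hspan)

theorem preservesDegeneracy_of_forall_hullMoment_symm_le (h : IsSRSMove K v γ) (hp : 1 ≤ p)
    (hmax : ∀ K', IsSymConvexBody K' →
      hullMoment μ (convexHull ℝ (unitVectors κ ∪ -unitVectors κ)) K' p ≤
        hullMoment μ (convexHull ℝ (unitVectors κ ∪ -unitVectors κ)) K p) :
    PreservesDegeneracy κ K v γ := by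
  intro x hx hspan
  rcases isEmpty_or_nonempty κ with hκ | ⟨⟨i⟩⟩
  · rwa [Subsingleton.elim (shear v γ ∘ x) x]
  have hiff (y : κ → E) :
      μ (pointComb y '' convexHull ℝ (unitVectors κ ∪ -unitVectors κ)) = 0 ↔
        Submodule.span ℝ (range y) ≠ ⊤ := by
    have hzero : (0 : E) ∈ convexHull ℝ (range y ∪ -range y) := by
      have hpos : y i ∈ range y ∪ -range y := .inl (mem_range_self i)
      have hneg : -y i ∈ range y ∪ -range y := .inr (neg_mem_neg.2 (mem_range_self i))
      simpa using (convex_convexHull ℝ _).midpoint_mem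
        (subset_convexHull ℝ _ hpos) (subset_convexHull ℝ _ hneg)
    rw [pointComb_image_convexHull_unitVectors_union_neg, measure_convexHull_eq_zero_iff μ hzero,
      Submodule.span_union, Submodule.span_neg, sup_idem]
  rw [← hiff]
  exact h.measure_pointComb_shear_eq_zero
    (((finite_unitVectors κ).union (finite_unitVectors κ).neg).isCompact_convexHull ℝ)
    (convex_convexHull ℝ _) hp hmax hx ((hiff x).2 hspan)

end IsSRSMove

theorem IsSRSDecomposable.exists_isSRSMove {K : Set E} (h : IsSRSDecomposable K)
    (hK : IsSymConvexBody K) :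
    ∃ v γ, IsSRSMove K v γ ∧ ¬∃ ℓ : E →ₗ[ℝ] ℝ, ∀ y ∈ projPerp v '' K, γ y = ℓ y := by
  obtain ⟨v, β, ε, hε, hv, hodd, hconv, hlin⟩ := h
  have hfamily (t : ℝ) : RSFamily K v β t = shear v (t • β) '' K := rfl
  refine ⟨v, (ε / 2) • β, ⟨hK, hv, fun x hx ↦ ?_, ?_, ?_⟩, fun ⟨ℓ, hℓ⟩ ↦ hlin ?_⟩
  · simp [hodd x hx]
  · rw [← hfamily]
    exact hconv _ ⟨by linarith, by linarith⟩
  · rw [← neg_smul, ← hfamily]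
    exact hconv _ ⟨by linarith, by linarith⟩
  · refine ⟨(ε / 2)⁻¹ • ℓ, fun y hy ↦ ?_⟩
    rw [LinearMap.smul_apply, ← hℓ y hy, Pi.smul_apply, inv_smul_smul₀ (by positivity)]

end Rigidity

/-- Let `p ≥ 1` and `N ≥ n`.  If a symmetric convex body `K ⊆ ℝⁿ` maximizes
`𝔼 U_{K, N+1}^p` or maximizes `𝔼 V_{K, N}^p` among all symmetric convex bodies in `ℝⁿ`,
then `K` is SRS-indecomposable. -/
theorem maximizer_not_SRSDecomposable
    {n : ℕ} (p : ℝ) (hp : 1 ≤ p) (N : ℕ) (hN : n ≤ N)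
    (K : Set (EuclideanSpace ℝ (Fin n))) (hK : IsSymConvexBody K)
    (hmax : (∀ K' : Set (EuclideanSpace ℝ (Fin n)), IsSymConvexBody K' →
              momentU n (N + 1) K' p ≤ momentU n (N + 1) K p) ∨
            (∀ K' : Set (EuclideanSpace ℝ (Fin n)), IsSymConvexBody K' →
              momentV n N K' p ≤ momentV n N K p)) :
    ¬ IsSRSDecomposable K := by
  intro hdec
  obtain ⟨v, γ, hmove, hlin⟩ := hdec.exists_isSRSMove hK
  have hdeg : PreservesDegeneracy (Fin N) K v γ := by
    simp only [momentU_eq_hullMoment, momentV_eq_hullMoment] at hmax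
    exact hmax.elim (hmove.preservesDegeneracy_of_forall_hullMoment_le hp)
      (hmove.preservesDegeneracy_of_forall_hullMoment_symm_le hp)
  have hdim : Module.finrank ℝ (EuclideanSpace ℝ (Fin n)) ≤ Fintype.card (Fin N) := by
    rwa [finrank_euclideanSpace_fin, Fintype.card_fin]
  exact hlin (hmove.exists_linear_of_preservesDegeneracy hdeg hdim)
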